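/- For every λ > 0 and every y ∈ ℝ, ∫_0^∞ (1 - Φ((y - x)/(2λ) + λ))·e^{-x} dx = 1 - Φ(y/(2λ) + λ) + e^{-y}·(1 - Φ(λ - y/(2λ))), where Φ denotes the standard normal distribution function. -/

import Mathlib

open MeasureTheory Filter Real Set Topology

noncomputable def stdNormalCDF (t : ℝ) : ℝ :=
  (Real.sqrt (2 * Real.pi))⁻¹ * ∫ s in Set.Iic t, Real.exp (-(s ^ 2) / 2)

lemma gint : Integrable (fun s : ℝ => Real.exp (-(s ^ 2) / 2)) := by
  have := integrable_exp_neg_mul_sq (b := 1/2) (by norm_num)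
  refine this.congr (ae_of_all _ fun s => ?_)
  simp only
  congr 1; ring

lemma gtot : ∫ s : ℝ, Real.exp (-(s ^ 2) / 2) = Real.sqrt (2 * Real.pi) := by
  have := integral_gaussian (1/2)
  rw [show 2 * Real.pi = Real.pi / (1/2) by ring, ← this]
  congr 1; ext s; congr 1; ring

lemma Phi_nonneg (t : ℝ) : 0 ≤ stdNormalCDF t := by
  unfold stdNormalCDF
  have : 0 ≤ ∫ s in Set.Iic t, Real.exp (-(s ^ 2) / 2) :=
    integral_nonneg fun s => (Real.exp_pos _).le
  positivity

lemma Phi_neg (t : ℝ) : stdNormalCDF (-t) = 1 - stdNormalCDF t := by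
  have h1 : ∫ s in Set.Iic (-t), Real.exp (-(s ^ 2) / 2)
      = ∫ s in Set.Ioi t, Real.exp (-(s ^ 2) / 2) := by
    have := integral_comp_neg_Iic (-t) (fun s : ℝ => Real.exp (-(s ^ 2) / 2))
    simpa using this
  have h2 := intervalIntegral.integral_Iic_add_Ioi (b := t) (gint.integrableOn) (gint.integrableOn)
  rw [gtot] at h2
  unfold stdNormalCDF
  have h3 : Real.sqrt (2 * Real.pi) ≠ 0 := by positivity
  rw [h1]
  rw [← eq_sub_iff_add_eq'] at h2
  rw [h2, mul_sub, inv_mul_cancel₀ h3]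

lemma Phi_le (t : ℝ) : stdNormalCDF t ≤ 1 := by
  have := Phi_nonneg (-t)
  rw [Phi_neg] at this
  linarith

lemma Phi_deriv (t : ℝ) :
    HasDerivAt stdNormalCDF ((Real.sqrt (2 * Real.pi))⁻¹ * Real.exp (-(t ^ 2) / 2)) t := by
  have h : stdNormalCDF = fun u => (Real.sqrt (2 * Real.pi))⁻¹ *
      ((∫ s in (0:ℝ)..u, Real.exp (-(s ^ 2) / 2)) +
        ∫ s in Set.Iic 0, Real.exp (-(s ^ 2) / 2)) := by
    ext u
    rw [← intervalIntegral.integral_Iic_sub_Iic gint.integrableOn gint.integrableOn]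
    simp [stdNormalCDF]
  rw [h]
  have hc : Continuous (fun s : ℝ => Real.exp (-(s ^ 2) / 2)) := by fun_prop
  exact ((hc.integral_hasStrictDerivAt 0 t).hasDerivAt.add_const _).const_mul _

lemma Phi_atBot : Tendsto stdNormalCDF atBot (𝓝 0) := by
  have := (tendsto_integral_Iic_zero (f := fun s : ℝ => Real.exp (-(s ^ 2) / 2)) (μ := volume)
    (a := fun t : ℝ => t) tendsto_id).const_mul (Real.sqrt (2 * Real.pi))⁻¹
  rw [mul_zero] at this
  exact this

theorem integral_one_sub_Phi_exp_neg (lam y : ℝ) (hlam : 0 < lam) :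
    ∫ x in Set.Ioi (0 : ℝ),
        (1 - stdNormalCDF ((y - x) / (2 * lam) + lam)) * Real.exp (-x) =
      1 - stdNormalCDF (y / (2 * lam) + lam) +
        Real.exp (-y) * (1 - stdNormalCDF (lam - y / (2 * lam))) := by
  have hu : ∀ c x : ℝ, HasDerivAt (fun x => (y - x) / (2 * lam) + c) (-1 / (2 * lam)) x :=
    fun c x => (((hasDerivAt_id x).const_sub y).div_const _).add_const _
  have hlim : ∀ c : ℝ, Tendsto (fun x => (y - x) / (2 * lam) + c) atTop atBot := by
    intro c
    refine tendsto_atBot_add_const_right _ _ (Tendsto.atBot_div_const (by positivity) ?_)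
    exact tendsto_atBot_add_const_left _ y tendsto_neg_atTop_atBot
  have hexp : Tendsto (fun x : ℝ => Real.exp (-x)) atTop (𝓝 0) :=
    Real.tendsto_exp_neg_atTop_nhds_zero
  have key := integral_Ioi_of_hasDerivAt_of_nonneg' (a := 0) (l := 0)
    (g := fun x => -((1 - stdNormalCDF ((y - x) / (2 * lam) + lam)) * Real.exp (-x))
      - Real.exp (-y) * stdNormalCDF ((y - x) / (2 * lam) + -lam))
    (g' := fun x => (1 - stdNormalCDF ((y - x) / (2 * lam) + lam)) * Real.exp (-x)) ?_ ?_ ?_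
  · rw [key, show lam - y / (2 * lam) = -(y / (2 * lam) + -lam) by ring, Phi_neg]
    simp
    ring
  · intro x _
    have h1 := (Phi_deriv _).comp x (hu lam x)
    have h2 := (Phi_deriv _).comp x (hu (-lam) x)
    have h3 := (((h1.const_sub 1).mul (hasDerivAt_neg x).exp).neg).sub (h2.const_mul (Real.exp (-y)))
    refine h3.congr_deriv ?_
    have e : Real.exp (-(((y - x) / (2 * lam) + lam) ^ 2) / 2) * Real.exp (-x)
        = Real.exp (-y) * Real.exp (-(((y - x) / (2 * lam) + -lam) ^ 2) / 2) := by
      rw [← Real.exp_add, ← Real.exp_add]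
      congr 1
      field_simp
      ring
    simp only [Function.comp]
    linear_combination (-1 / (2 * lam)) * (Real.sqrt (2 * Real.pi))⁻¹ * e
  · intro x _
    exact mul_nonneg (by linarith [Phi_le ((y - x) / (2 * lam) + lam)]) (Real.exp_pos _).le
  · have a1 := Phi_atBot.comp (hlim lam)
    have a2 := Phi_atBot.comp (hlim (-lam))
    simpa [Function.comp_def] using (((a1.const_sub 1).mul hexp).neg).sub (a2.const_mul (Real.exp (-y)))
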